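/- arXiv:2407.20869 — 2 statements merged into one kernel-verified Lean document; each statement's English description precedes it below -/
import Mathlib

section
/- Let A, γ, k, η, β be real constants with η ≠ k and fix t ∈ ℝ. Let v₋, v > 0 and w₋, w ∈ ℝ satisfy the 2-contact-discontinuity relation w = w₋ − A v₋^γ e^{k(γ+1)t} + A v^γ e^{k(γ+1)t}. Then λ₂(v,w,t) = λ₂(v₋,w₋,t), and with σ = λ₂(v₋,w₋,t) both components of the Rankine–Hugoniot condition hold: σ·(H(v₋,w₋) − H(v,w)) = G(v₋,w₋) − G(v,w). -/
/-- Conserved quantity H(v,w) of the transformed system (case η ≠ k). -/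
noncomputable def Hmap (β η k : ℝ) (v w : ℝ) : ℝ × ℝ :=
  (v, v * (w + β / (η - k)))

/-- Flux G(v,w) of the transformed system (case η ≠ k) at time t. -/
noncomputable def Gmap (A γ k η β t : ℝ) (v w : ℝ) : ℝ × ℝ :=
  (v * Real.exp ((η - k) * t) * (w + β / (η - k)) - v * β / (η - k)
      - A * v ^ (γ + 1) * Real.exp (k * (γ + 1) * t) * Real.exp ((η - k) * t),
    v * (w + β / (η - k)) ^ (2 : ℕ) * Real.exp ((η - k) * t)
      - (w + β / (η - k)) * Real.exp ((η - k) * t) * A * v ^ (γ + 1)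
          * Real.exp (k * (γ + 1) * t)
      - (β / (η - k)) * (w + β / (η - k)) * v)

/-- Characteristic speed λ₂ of the transformed Keyfitz–Kranzer system (case η ≠ k). -/
noncomputable def lambda2 (A γ k η β : ℝ) (v w t : ℝ) : ℝ :=
  -β / (η - k) +
    (w + β / (η - k) - A * v ^ γ * Real.exp (k * (γ + 1) * t)) *
      Real.exp ((η - k) * t)

/-! The transformed system is of Keyfitz–Kranzer type: at every state the flux is the conserved
quantity scaled by the characteristic speed, `G = λ₂ • H`. A jump between two states with the same
`λ₂` therefore satisfies the Rankine–Hugoniot condition with `σ = λ₂`, and the contact relation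
describes exactly the level sets of `λ₂`, because `λ₂` depends on the state only through
`w - A v ^ γ e^{k(γ+1)t}`. -/

section ContactDiscontinuity

variable {A γ k η β t vm v wm w : ℝ}

theorem lambda2_eq_iff_contact :
    lambda2 A γ k η β v w t = lambda2 A γ k η β vm wm t ↔
      w = wm - A * vm ^ γ * Real.exp (k * (γ + 1) * t)
        + A * v ^ γ * Real.exp (k * (γ + 1) * t) := by
  rw [lambda2, lambda2, add_right_inj, mul_left_inj' (Real.exp_ne_zero _)]
  constructor <;> intro h <;> linarith

theorem Gmap_eq_lambda2_smul_Hmap (hv : v ≠ 0) :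
    Gmap A γ k η β t v w = lambda2 A γ k η β v w t • Hmap β η k v w := by
  have hpow : v ^ (γ + 1) = v ^ γ * v := Real.rpow_add_one hv γ
  simp only [Gmap, lambda2, Hmap, hpow, Prod.smul_mk, smul_eq_mul, Prod.mk.injEq]
  constructor <;> ring

theorem rankine_hugoniot_of_lambda2_eq (hvm : vm ≠ 0) (hv : v ≠ 0)
    (hspeed : lambda2 A γ k η β v w t = lambda2 A γ k η β vm wm t) :
    lambda2 A γ k η β vm wm t • (Hmap β η k vm wm - Hmap β η k v w) =
      Gmap A γ k η β t vm wm - Gmap A γ k η β t v w := by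
  rw [Gmap_eq_lambda2_smul_Hmap hvm, Gmap_eq_lambda2_smul_Hmap hv, hspeed, smul_sub]

end ContactDiscontinuity

/-- along the 2-contact-discontinuity relation, λ₂ is constant and, with
σ = λ₂(v₋,w₋,t), both components of the Rankine–Hugoniot condition hold. -/
theorem contact_discontinuity_rankine_hugoniot
    (A γ k η β t : ℝ) (hηk : η ≠ k)
    (vm v : ℝ) (hvm : 0 < vm) (hv : 0 < v) (wm w : ℝ)
    (hcontact : w = wm - A * vm ^ γ * Real.exp (k * (γ + 1) * t)
      + A * v ^ γ * Real.exp (k * (γ + 1) * t)) :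
    lambda2 A γ k η β v w t = lambda2 A γ k η β vm wm t ∧
    lambda2 A γ k η β vm wm t • (Hmap β η k vm wm - Hmap β η k v w) =
      Gmap A γ k η β t vm wm - Gmap A γ k η β t v w := by
  have hspeed : lambda2 A γ k η β v w t = lambda2 A γ k η β vm wm t :=
    lambda2_eq_iff_contact.mpr hcontact
  exact ⟨hspeed, rankine_hugoniot_of_lambda2_eq hvm.ne' hv.ne' hspeed⟩
end

section
/- Let A, γ, k, η, β be real constants with η ≠ k and fix t ∈ ℝ. Let v₋, v > 0 with v ≠ v₋, let w₋ ∈ ℝ, and set w = w₋ (the 1-shock relation) and σ₁ = (w₋ + β/(η−k))e^{(η−k)t} − β/(η−k) − A e^{(η−k)t} e^{k(γ+1)t} (v^{γ+1} − v₋^{γ+1})/(v − v₋). Then both components of the Rankine–Hugoniot condition hold: σ₁·(H(v₋,w₋) − H(v,w₋)) = G(v₋,w₋) − G(v,w₋). -/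
/-!
With `w` frozen, the states `H(v, w) = v • (1, w + β / (η - k))` run along a line through the
origin, and the flux `G(v, w)` is a scalar function of `v` times the same direction vector. The
Rankine–Hugoniot condition for the system thus reduces to the one for a scalar conservation law,
whose shock speed is the slope of the chord of the scalar flux.
-/

section Slope

variable {𝕜 E : Type*} [Field 𝕜] [AddCommGroup E] [Module 𝕜 E]

theorem slope_smul_const_sub_const_smul (c : E) (d : 𝕜) (g : 𝕜 → E) {a b : 𝕜} (hab : a ≠ b) :
    slope (fun x => x • c - d • g x) a b = c - d • slope g a b := by
  have increment :
      b • c - d • g b - (a • c - d • g a) = (b - a) • c - d • (g b - g a) := by module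
  rw [slope_def_module, slope_def_module, increment, smul_sub,
    inv_smul_smul₀ (sub_ne_zero.mpr hab.symm), smul_comm]

theorem slope_smul_sub_smul (f : 𝕜 → 𝕜) (a b : 𝕜) (e : E) :
    slope f a b • (a • e - b • e) = f a • e - f b • e := by
  have chord : slope f a b * (a - b) = f a - f b := by
    rw [slope_comm, mul_comm]
    exact sub_smul_slope f b a
  rw [← sub_smul, smul_smul, chord, sub_smul]

end Slope

/-- The scalar flux governing `v` when `w` is held constant: the factor by which `Gmap` stretches
the direction `(1, w + β / (η - k))`. The argument `v` comes last, so that the flux for a given `w`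
is a partial application. -/
noncomputable def scalarFlux (A γ k η β t w v : ℝ) : ℝ :=
  v * ((w + β / (η - k)) * Real.exp ((η - k) * t) - β / (η - k))
    - A * Real.exp ((η - k) * t) * Real.exp (k * (γ + 1) * t) * v ^ (γ + 1)

theorem Hmap_eq_smul (β η k v w : ℝ) :
    Hmap β η k v w = v • ((1, w + β / (η - k)) : ℝ × ℝ) := by
  simp only [Hmap, Prod.smul_mk, smul_eq_mul, mul_one]

theorem Gmap_eq_scalarFlux_smul (A γ k η β t v w : ℝ) :
    Gmap A γ k η β t v w =
      scalarFlux A γ k η β t w v • ((1, w + β / (η - k)) : ℝ × ℝ) := by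
  simp only [Gmap, scalarFlux, Prod.smul_mk, smul_eq_mul]
  ext <;> ring

theorem slope_scalarFlux (A γ k η β t w : ℝ) {v₁ v₂ : ℝ} (hne : v₁ ≠ v₂) :
    slope (scalarFlux A γ k η β t w) v₁ v₂ =
      (w + β / (η - k)) * Real.exp ((η - k) * t) - β / (η - k)
        - A * Real.exp ((η - k) * t) * Real.exp (k * (γ + 1) * t) *
            ((v₂ ^ (γ + 1) - v₁ ^ (γ + 1)) / (v₂ - v₁)) := by
  rw [← slope_def_field (fun v : ℝ => v ^ (γ + 1))]
  exact slope_smul_const_sub_const_smul _ _ _ hne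

/-- for a 1-shock (w = w₋) with speed σ₁, both components of the
Rankine–Hugoniot condition hold: σ₁·(H(v₋,w₋) − H(v,w₋)) = G(v₋,w₋) − G(v,w₋). -/
theorem one_shock_rankine_hugoniot
    (A γ k η β t : ℝ) (hηk : η ≠ k)
    (vm v : ℝ) (hvm : 0 < vm) (hv : 0 < v) (hne : v ≠ vm) (wm : ℝ)
    (σ₁ : ℝ)
    (hσ : σ₁ = (wm + β / (η - k)) * Real.exp ((η - k) * t) - β / (η - k)
      - A * Real.exp ((η - k) * t) * Real.exp (k * (γ + 1) * t) *
          ((v ^ (γ + 1) - vm ^ (γ + 1)) / (v - vm))) :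
    σ₁ • (Hmap β η k vm wm - Hmap β η k v wm) =
      Gmap A γ k η β t vm wm - Gmap A γ k η β t v wm := by
  have speed_eq_slope : σ₁ = slope (scalarFlux A γ k η β t wm) vm v :=
    hσ.trans (slope_scalarFlux A γ k η β t wm hne.symm).symm
  simp only [Hmap_eq_smul, Gmap_eq_scalarFlux_smul, speed_eq_slope]
  exact slope_smul_sub_smul (scalarFlux A γ k η β t wm) vm v _
end
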